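/- arXiv:1901.04241 — 3 statements merged into one kernel-verified Lean document; each statement's English description precedes it below -/
import Mathlib

section
/- Let n ≥ 1, let ω be a primitive n-th root of unity in a field F, and let e_0, …, e_{n−1} ∈ F^n be the rows of the Fourier matrix. Let r, k, a be integers with 1 ≤ r ≤ n and gcd(k, n) = 1, and let C be the F-linear span of the r rows e_{(a + i·k) mod n}, i = 0, 1, …, r−1. Then dim_F C = r and every nonzero element of C has Hamming weight at least n − r + 1; that is, C is an (n, r, n−r+1) MDS code. -/
/-- Hamming weight of a vector: the number of nonzero coordinates. -/
noncomputable def hWeight {F : Type*} [Field F] {n : ℕ} (v : Fin n → F) : ℕ :=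
  open scoped Classical in
  (Finset.univ.filter fun m => v m ≠ 0).card

/-- The `i`-th row of the Fourier matrix built from `ω`: `(e_i)_m = ω^(i·m)`. -/
def fourierRow {F : Type*} [Field F] (n : ℕ) (ω : F) (i : ZMod n) : Fin n → F :=
  fun m => ω ^ (i.val * m.val)

/-!
Write `A` and `K` for the residues of `a` and `k` modulo `n`. The coordinate `m` of the row
`e_{a + i k}` is `ω ^ (A m) * (ω ^ (K m)) ^ i`, so a combination of the rows with coefficients
`c i` has the coordinates `ω ^ (A m) * p (ω ^ (K m))`, where `p = ∑ i, c i X ^ i` has degree less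
than `r`. As `k` is prime to `n`, the points `ω ^ (K m)` are distinct: the span is a generalized
Reed–Solomon code. A nonzero `p` vanishes at fewer than `r` of the `n` points, which bounds the
weight and, since `r ≤ n`, makes `p ↦ (ω ^ (A m) * p (ω ^ (K m)))_m` injective.
-/

section GeneralizedReedSolomon

open Polynomial

section CommSemiring

variable {R ι : Type*} [CommSemiring R]

/-- Evaluation of polynomials at the nodes `x`, scaled at each node by the column multiplier `u`:
the encoding map of generalized Reed–Solomon codes. -/
noncomputable def scaledEval (u x : ι → R) : R[X] →ₗ[R] (ι → R) :=
  LinearMap.pi fun m => u m • leval (x m)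

/-- The generalized Reed–Solomon code with column multipliers `u` and nodes `x`: the scaled
evaluations of the polynomials of degree less than `r`. Zero multipliers and repeated nodes are not
excluded by the definition. -/
noncomputable def grsCode (u x : ι → R) (r : ℕ) : Submodule R (ι → R) :=
  (degreeLT R r).map (scaledEval u x)

theorem scaledEval_apply (u x : ι → R) (p : R[X]) (m : ι) :
    scaledEval u x p m = u m * p.eval (x m) :=
  rfl

theorem grsCode_eq_span (u x : ι → R) (r : ℕ) :
    grsCode u x r = Submodule.span R (Set.range fun (i : Fin r) m => u m * x m ^ (i : ℕ)) := by
  classical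
  have range_eq_image : (Set.range fun (i : Fin r) m => u m * x m ^ (i : ℕ)) =
      Set.image (scaledEval u x) ((Finset.range r).image fun i => X ^ i : Finset R[X]) := by
    ext v
    simp [Fin.exists_iff, funext_iff, scaledEval_apply]
  rw [grsCode, degreeLT_eq_span_X_pow, Submodule.map_span, range_eq_image]

end CommSemiring

variable {R ι : Type*} [CommRing R] [IsDomain R] [Fintype ι] {u x : ι → R} {r : ℕ}

theorem card_filter_eval_eq_zero_le_natDegree [DecidableEq R] (hx : Function.Injective x)
    {p : R[X]} (hp : p ≠ 0) :
    (Finset.univ.filter fun m => p.eval (x m) = 0).card ≤ p.natDegree := by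
  rw [← Finset.card_image_of_injective _ hx]
  refine card_le_degree_of_subset_roots fun y hy => ?_
  obtain ⟨m, hm, rfl⟩ := Finset.mem_image.mp hy
  exact (mem_roots hp).mpr (Finset.mem_filter.mp hm).2

theorem card_le_hammingNorm_scaledEval_add_natDegree [DecidableEq R] (hu : ∀ m, u m ≠ 0)
    (hx : Function.Injective x) {p : R[X]} (hp : p ≠ 0) :
    Fintype.card ι ≤ hammingNorm (scaledEval u x p) + p.natDegree := by
  have hammingNorm_eq : hammingNorm (scaledEval u x p) =
      (Finset.univ.filter fun m => ¬p.eval (x m) = 0).card := by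
    simp only [hammingNorm, scaledEval_apply, ne_eq, mul_eq_zero, hu, false_or]
  calc Fintype.card ι
      = hammingNorm (scaledEval u x p) +
          (Finset.univ.filter fun m => p.eval (x m) = 0).card := by
        rw [hammingNorm_eq, add_comm, Finset.card_filter_add_card_filter_not, Finset.card_univ]
    _ ≤ hammingNorm (scaledEval u x p) + p.natDegree := by
        gcongr
        exact card_filter_eval_eq_zero_le_natDegree hx hp

theorem card_lt_hammingNorm_add_of_mem_grsCode [DecidableEq R] (hu : ∀ m, u m ≠ 0)
    (hx : Function.Injective x) {v : ι → R} (hv : v ∈ grsCode u x r) (hv0 : v ≠ 0) :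
    Fintype.card ι < hammingNorm v + r := by
  obtain ⟨p, hpr, rfl⟩ := Submodule.mem_map.mp hv
  have hp : p ≠ 0 := by
    rintro rfl
    exact hv0 (map_zero _)
  have natDegree_lt : p.natDegree < r := (natDegree_lt_iff_degree_lt hp).mpr (mem_degreeLT.mp hpr)
  have := card_le_hammingNorm_scaledEval_add_natDegree hu hx hp
  lia

theorem injective_scaledEval_domRestrict_degreeLT (hu : ∀ m, u m ≠ 0)
    (hx : Function.Injective x) (hr : r ≤ Fintype.card ι) :
    Function.Injective ((scaledEval u x).domRestrict (degreeLT R r)) := by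
  classical
  refine (injective_iff_map_eq_zero _).mpr fun ⟨p, hpr⟩ hp_eval => Subtype.ext ?_
  by_contra hp
  have natDegree_lt : p.natDegree < r := (natDegree_lt_iff_degree_lt hp).mpr (mem_degreeLT.mp hpr)
  have card_le := card_le_hammingNorm_scaledEval_add_natDegree hu hx hp
  rw [LinearMap.domRestrict_apply] at hp_eval
  rw [hp_eval, hammingNorm_zero] at card_le
  lia

theorem finrank_grsCode (hu : ∀ m, u m ≠ 0) (hx : Function.Injective x)
    (hr : r ≤ Fintype.card ι) : Module.finrank R (grsCode u x r) = r := by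
  rw [grsCode, ← LinearMap.range_domRestrict,
    LinearMap.finrank_range_of_inj (injective_scaledEval_domRestrict_degreeLT hu hx hr),
    (degreeLTEquiv R r).finrank_eq, Module.finrank_fin_fun]

end GeneralizedReedSolomon

theorem hWeight_eq_hammingNorm {F : Type*} [Field F] [DecidableEq F] {n : ℕ} (v : Fin n → F) :
    hWeight v = hammingNorm v := by
  unfold hWeight hammingNorm
  congr!

theorem injective_pow_zmod_val_pow {M : Type*} [CommMonoid M] {n : ℕ} [NeZero n] {ω : M}
    (hω : IsPrimitiveRoot ω n) {k : ZMod n} (hk : IsUnit k) :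
    Function.Injective fun m : Fin n => (ω ^ k.val) ^ (m : ℕ) := by
  have val_coprime : k.val.Coprime n := by
    rwa [← ZMod.isUnit_iff_coprime, ZMod.natCast_zmod_val]
  exact fun m m' h => Fin.ext ((hω.pow_of_coprime k.val val_coprime).pow_inj m.isLt m'.isLt h)

section FourierRow

variable {F : Type*} [Field F] {n : ℕ} [NeZero n] {ω : F}

theorem fourierRow_add_natCast_mul (hω : ω ^ n = 1) (a k : ZMod n) (i : ℕ) (m : Fin n) :
    fourierRow n ω (a + i * k) m = ω ^ (a.val * m) * ((ω ^ k.val) ^ (m : ℕ)) ^ i := by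
  have val_modEq : (a + i * k).val ≡ a.val + i * k.val [MOD n] := by
    simp [← ZMod.natCast_eq_natCast_iff]
  rw [fourierRow, pow_mul, pow_eq_pow_of_modEq val_modEq hω]
  ring

theorem span_fourierRow_eq_grsCode (hω : ω ^ n = 1) (a k : ZMod n) (r : ℕ) :
    Submodule.span F (Set.range fun i : Fin r => fourierRow n ω (a + ((i : ℕ) : ZMod n) * k)) =
      grsCode (fun m : Fin n => ω ^ (a.val * m)) (fun m => (ω ^ k.val) ^ (m : ℕ)) r := by
  rw [grsCode_eq_span]
  congr 2
  ext i m
  exact fourierRow_add_natCast_mul hω a k i m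

end FourierRow

/-- The span of `r` rows of the Fourier matrix in arithmetic sequence
`e_{(a + i·k) mod n}`, `i = 0, …, r−1`, with `gcd(k, n) = 1`, has dimension `r` and every
nonzero element has Hamming weight at least `n − r + 1`: it is an `(n, r, n−r+1)` MDS code. -/
theorem span_arith_rows_MDS {F : Type*} [Field F] (n : ℕ) [NeZero n] (ω : F)
    (hω1 : ω ^ n = 1) (hωprim : ∀ i : ℕ, 1 ≤ i → i < n → ω ^ i ≠ 1)
    (r : ℕ) (hr1 : 1 ≤ r) (hrn : r ≤ n) (k a : ℤ) (hk : Int.gcd k n = 1)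
    (C : Submodule F (Fin n → F))
    (hC : C = Submodule.span F (Set.range fun i : Fin r =>
      fourierRow n ω ((a : ZMod n) + ((i : ℕ) : ZMod n) * ((k : ZMod n))))) :
    Module.finrank F C = r ∧ ∀ v ∈ C, v ≠ 0 → n - r + 1 ≤ hWeight v := by
  classical
  have hω : IsPrimitiveRoot ω n := .mk_of_lt ω (NeZero.pos n) hω1 hωprim
  have hk_unit : IsUnit (k : ZMod n) :=
    (ZMod.coe_int_isUnit_iff_isCoprime k n).mpr (Int.isCoprime_iff_gcd_eq_one.mpr hk).symm
  have nodes_injective := injective_pow_zmod_val_pow hω hk_unit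
  have multipliers_ne_zero : ∀ m : Fin n, ω ^ ((a : ZMod n).val * m) ≠ 0 :=
    fun m => pow_ne_zero _ (hω.ne_zero (NeZero.ne n))
  rw [hC, span_fourierRow_eq_grsCode hω1]
  refine ⟨finrank_grsCode multipliers_ne_zero nodes_injective (by simpa using hrn), ?_⟩
  intro v hv hv0
  have card_lt := card_lt_hammingNorm_add_of_mem_grsCode multipliers_ne_zero nodes_injective hv hv0
  rw [Fintype.card_fin] at card_lt
  rw [hWeight_eq_hammingNorm]
  lia
end

section
/- Let n ≥ 1, let ω be a primitive n-th root of unity in a field F, and let e_0, …, e_{n−1} ∈ F^n be the rows of the Fourier matrix. For any subset S ⊆ {0, 1, …, n−1}, let C be the F-linear span of {e_i : i ∈ S}. Then the dual code C^⊥ with respect to the standard bilinear form equals the F-linear span of {e_j : 0 ≤ j ≤ n−1 and (n − j) mod n ∉ S}. -/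
/-- The dual code of `C` with respect to the standard bilinear form. -/
def dualCode {F : Type*} [Field F] {n : ℕ} (C : Submodule F (Fin n → F)) :
    Submodule F (Fin n → F) where
  carrier := {v | ∀ u ∈ C, ∑ m, u m * v m = 0}
  add_mem' := by
    intro a b ha hb u hu
    have h : ∑ m, u m * (a + b) m = (∑ m, u m * a m) + ∑ m, u m * b m := by
      rw [← Finset.sum_add_distrib]
      exact Finset.sum_congr rfl fun m _ => by simp [mul_add]
    rw [h, ha u hu, hb u hu, add_zero]
  zero_mem' := by intro u hu; simp
  smul_mem' := by
    intro c a ha u hu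
    have h : ∑ m, u m * (c • a) m = c * ∑ m, u m * a m := by
      rw [Finset.mul_sum]
      exact Finset.sum_congr rfl fun m _ => by simp [smul_eq_mul]; ring
    rw [h, ha u hu, mul_zero]

/-!
Since `ω ^ (i + j) = 1` exactly when `j ≡ -i` modulo `n`, summing geometric series gives
`e_i ⬝ᵥ e_j = n` if `j ≡ -i` and `0` otherwise. As `n ≠ 0` in `F`, the families `e_i` and `e_{-i}`
are biorthogonal up to scaling; in particular the `e_{-i}` form a basis, and the coefficient of
`e_{-i}` in a vector `v` is `(e_i ⬝ᵥ v) / n`. So `v` is orthogonal to all `e_i` with `i ∈ S`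
precisely when only the `e_{-i}` with `i ∉ S` occur in it.
-/

section Biorthogonal

variable {ι R M N : Type*} [CommRing R] [AddCommGroup M] [AddCommGroup N] [Module R M] [Module R N]
  {B : M →ₗ[R] N →ₗ[R] R}

theorem mem_orthogonalBilin_span_iff {s : Set M} {v : N} :
    v ∈ (Submodule.span R s).orthogonalBilin B ↔ ∀ u ∈ s, B u v = 0 :=
  Submodule.span_le (p := LinearMap.ker (B.flip v))

variable {x : ι → M} {y : ι → N}

theorem apply_linearCombination_of_biorthogonal (horth : Pairwise fun i j ↦ B (x i) (y j) = 0)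
    (c : ι →₀ R) (i : ι) :
    B (x i) (Finsupp.linearCombination R y c) = c i * B (x i) (y i) := by
  rw [Finsupp.linearCombination_apply, map_finsuppSum,
    Finsupp.sum_eq_single i (fun j _ hji ↦ by simp [horth hji.symm]) (by simp), map_smul,
    smul_eq_mul]

variable [NoZeroDivisors R]

theorem linearIndependent_of_biorthogonal (horth : Pairwise fun i j ↦ B (x i) (y j) = 0)
    (hdiag : ∀ i, B (x i) (y i) ≠ 0) : LinearIndependent R y := by
  refine linearIndependent_iff.2 fun c hc ↦ Finsupp.ext fun i ↦ ?_
  have hci : c i * B (x i) (y i) = 0 := by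
    rw [← apply_linearCombination_of_biorthogonal horth, hc, map_zero]
  exact (mul_eq_zero.1 hci).resolve_right (hdiag i)

theorem orthogonalBilin_span_image_of_biorthogonal
    (horth : Pairwise fun i j ↦ B (x i) (y j) = 0) (hdiag : ∀ i, B (x i) (y i) ≠ 0)
    (hspan : Submodule.span R (Set.range y) = ⊤) (S : Set ι) :
    (Submodule.span R (x '' S)).orthogonalBilin B = Submodule.span R (y '' Sᶜ) := by
  apply le_antisymm
  · intro v hv
    obtain ⟨c, rfl⟩ : ∃ c, Finsupp.linearCombination R y c = v :=
      Finsupp.mem_span_range_iff_exists_finsupp.1 (hspan ▸ Submodule.mem_top)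
    have coeff_eq_zero (i : ι) (hi : i ∈ S) : c i = 0 := by
      have hci := mem_orthogonalBilin_span_iff.1 hv (x i) (Set.mem_image_of_mem x hi)
      rw [apply_linearCombination_of_biorthogonal horth] at hci
      exact (mul_eq_zero.1 hci).resolve_right (hdiag i)
    refine (Finsupp.mem_span_image_iff_linearCombination R).2 ⟨c, ?_, rfl⟩
    exact (Finsupp.mem_supported R c).2 fun i hi hiS ↦
      Finsupp.mem_support_iff.1 hi (coeff_eq_zero i hiS)
  · rw [Submodule.span_le]
    rintro _ ⟨j, hj, rfl⟩
    refine mem_orthogonalBilin_span_iff.2 ?_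
    rintro _ ⟨i, hi, rfl⟩
    exact horth (ne_of_mem_of_not_mem hi hj)

end Biorthogonal

theorem dualCode_eq_orthogonalBilin {F : Type*} [Field F] {n : ℕ}
    (C : Submodule F (Fin n → F)) : dualCode C = C.orthogonalBilin (dotProductBilin F F) :=
  rfl

theorem pow_val_add_val_eq_one_iff {M : Type*} [CommMonoid M] {n : ℕ} [NeZero n] {ω : M}
    (hω : IsPrimitiveRoot ω n) (i j : ZMod n) : ω ^ (i.val + j.val) = 1 ↔ i + j = 0 := by
  rw [hω.pow_eq_one_iff_dvd, ← ZMod.natCast_eq_zero_iff, Nat.cast_add, ZMod.natCast_zmod_val,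
    ZMod.natCast_zmod_val]

section Fourier

variable {F : Type*} [Field F] {n : ℕ} {ω : F}

theorem fourierRow_dotProduct_eq_geom_sum (i j : ZMod n) :
    fourierRow n ω i ⬝ᵥ fourierRow n ω j = ∑ m ∈ Finset.range n, (ω ^ (i.val + j.val)) ^ m := by
  simp only [dotProduct, fourierRow, Finset.sum_range, pow_mul, pow_add, mul_pow]

variable [NeZero n]

theorem fourierRow_dotProduct_fourierRow (hω : IsPrimitiveRoot ω n) (i j : ZMod n) :
    fourierRow n ω i ⬝ᵥ fourierRow n ω j = if i + j = 0 then (n : F) else 0 := by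
  rw [fourierRow_dotProduct_eq_geom_sum]
  split_ifs with hij
  · rw [(pow_val_add_val_eq_one_iff hω i j).2 hij, one_geom_sum]
  · have hne : ω ^ (i.val + j.val) ≠ 1 := mt (pow_val_add_val_eq_one_iff hω i j).1 hij
    rw [geom_sum_eq hne, pow_right_comm, hω.pow_eq_one, one_pow, sub_self, zero_div]

theorem pairwise_fourierRow_dotProduct_neg_eq_zero (hω : IsPrimitiveRoot ω n) :
    Pairwise fun i j : ZMod n ↦ fourierRow n ω i ⬝ᵥ fourierRow n ω (-j) = 0 := by
  intro i j hij
  have hne : i + -j ≠ 0 := by rwa [← sub_eq_add_neg, sub_ne_zero]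
  exact (fourierRow_dotProduct_fourierRow hω i (-j)).trans (if_neg hne)

theorem fourierRow_dotProduct_neg_self_ne_zero (hω : IsPrimitiveRoot ω n) (i : ZMod n) :
    fourierRow n ω i ⬝ᵥ fourierRow n ω (-i) ≠ 0 := by
  rw [fourierRow_dotProduct_fourierRow hω, if_pos (add_neg_cancel i)]
  exact hω.neZero'.out

theorem span_range_fourierRow_neg (hω : IsPrimitiveRoot ω n) :
    Submodule.span F (Set.range fun i : ZMod n ↦ fourierRow n ω (-i)) = ⊤ := by
  have hlin : LinearIndependent F fun i : ZMod n ↦ fourierRow n ω (-i) :=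
    linearIndependent_of_biorthogonal (B := dotProductBilin F F)
      (pairwise_fourierRow_dotProduct_neg_eq_zero hω) (fourierRow_dotProduct_neg_self_ne_zero hω)
  exact hlin.span_eq_top_of_card_eq_finrank' (by simp [ZMod.card])

end Fourier

/-- For any subset `S` of row indices, the dual (w.r.t. the standard
bilinear form) of the span of `{e_i : i ∈ S}` is the span of `{e_j : (n − j) mod n ∉ S}`. -/
theorem dual_of_span_fourierRows {F : Type*} [Field F] (n : ℕ) [NeZero n] (ω : F)
    (hω1 : ω ^ n = 1) (hωprim : ∀ i : ℕ, 1 ≤ i → i < n → ω ^ i ≠ 1)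
    (S : Set (ZMod n)) :
    dualCode (Submodule.span F (fourierRow n ω '' S)) =
      Submodule.span F (fourierRow n ω '' {j : ZMod n | -j ∉ S}) := by
  have hω : IsPrimitiveRoot ω n := .mk_of_lt ω (NeZero.pos n) hω1 hωprim
  have himage : fourierRow n ω '' {j | -j ∉ S} = (fun i ↦ fourierRow n ω (-i)) '' Sᶜ := by
    rw [← Set.image_image (fourierRow n ω) Neg.neg, Set.image_neg_eq_neg]
    rfl
  rw [himage, dualCode_eq_orthogonalBilin]
  exact orthogonalBilin_span_image_of_biorthogonal (pairwise_fourierRow_dotProduct_neg_eq_zero hω)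
    (fourierRow_dotProduct_neg_self_ne_zero hω) (span_range_fourierRow_neg hω) S
end

section
/- Let n ≥ 1, let ω be a primitive n-th root of unity in a field F, and let e_0, …, e_{n−1} ∈ F^n be the rows of the Fourier matrix. Let r ≥ 0 be an integer with 2r + 1 ≤ n, and let C be the F-linear span of the 2r+1 rows e_0, e_1, …, e_r, e_{n−r}, e_{n−r+1}, …, e_{n−1} (for r = 0 take C = span{e_0}). Then C is an LCD MDS code of length n, dimension 2r+1, and minimum distance n − 2r. -/
/-- Minimum distance of a code: the least Hamming weight of a nonzero codeword. -/
noncomputable def minDist {F : Type*} [Field F] {n : ℕ} (C : Submodule F (Fin n → F)) : ℕ :=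
  sInf {d | ∃ v ∈ C, v ≠ 0 ∧ hWeight v = d}

/-!
Multiplying row `e_a` of the Fourier matrix entrywise by the `j`-th power of `e_1` gives `e_{a+j}`,
so the span of `k` cyclically consecutive rows starting at `e_a` is the generalized Reed–Solomon
code with nodes `e_1` and weights `e_a`, which is MDS because a nonzero polynomial of degree `< k`
has at most `k - 1` roots. The block of the theorem consists of the `2r + 1` consecutive indices
starting at `-r` in `ZMod n`.

For the LCD property, `e_i` and `e_j` are orthogonal unless `i + j = 0`. The index set is symmetric
under negation, so a codeword of the dual is orthogonal to `e_{-j}` for each `j` in it, and this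
inner product is `n` times the coefficient of `e_j` in the codeword, where `n ≠ 0` in `F`.
-/

open Polynomial

section Weight

variable {F : Type*} [Field F] {n : ℕ}

theorem hWeight_zero : hWeight (0 : Fin n → F) = 0 := by
  simp [hWeight]

theorem hWeight_add_card_zeros [DecidableEq F] (v : Fin n → F) :
    hWeight v + (Finset.univ.filter fun m => v m = 0).card = n := by
  have split_univ := Finset.card_filter_add_card_filter_not (s := Finset.univ) fun m => v m = 0
  rw [Finset.card_univ, Fintype.card_fin, add_comm] at split_univ
  rw [hWeight]
  convert split_univ

theorem hWeight_add_card_le {v : Fin n → F} {s : Finset (Fin n)} (hs : ∀ m ∈ s, v m = 0) :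
    hWeight v + s.card ≤ n := by
  classical
  calc hWeight v + s.card ≤ hWeight v + (Finset.univ.filter fun m => v m = 0).card := by
        gcongr
        exact fun m hm => Finset.mem_filter.2 ⟨Finset.mem_univ m, hs m hm⟩
    _ = n := hWeight_add_card_zeros v

end Weight

section ReedSolomon

variable {F : Type*} [Field F] {n : ℕ}

/-- The weighted evaluation map `p ↦ (w₀ p(x₀), …, w_{n-1} p(x_{n-1}))`, the encoder of
generalized Reed–Solomon codes. -/
noncomputable def weightedEval (x w : Fin n → F) : F[X] →ₗ[F] (Fin n → F) :=
  LinearMap.mulLeft F w ∘ₗ LinearMap.pi fun m => leval (x m)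

/-- The generalized Reed–Solomon code of weighted evaluations, with nodes `x` and weights `w`, of
the polynomials of degree less than `k`. The nodes are not required to be distinct, nor the weights
to be nonzero. -/
noncomputable def reedSolomonCode (x w : Fin n → F) (k : ℕ) : Submodule F (Fin n → F) :=
  (degreeLT F k).map (weightedEval x w)

variable {x w : Fin n → F} {k : ℕ} {p : F[X]}

theorem weightedEval_apply (x w : Fin n → F) (p : F[X]) (m : Fin n) :
    weightedEval x w p m = w m * p.eval (x m) :=
  rfl

theorem weightedEval_X_pow (x w : Fin n → F) (j : ℕ) : weightedEval x w (X ^ j) = w * x ^ j := by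
  ext m
  simp [weightedEval_apply]

theorem reedSolomonCode_eq_span (x w : Fin n → F) (k : ℕ) :
    reedSolomonCode x w k = Submodule.span F ((fun j : ℕ => w * x ^ j) '' Set.Iio k) := by
  classical
  rw [reedSolomonCode, degreeLT_eq_span_X_pow, Submodule.map_span, Finset.coe_image,
    Finset.coe_range, Set.image_image]
  simp only [weightedEval_X_pow]

theorem lt_hWeight_weightedEval_add (hx : Function.Injective x) (hw : ∀ m, w m ≠ 0)
    (hp : p ∈ degreeLT F k) (hp0 : p ≠ 0) : n < hWeight (weightedEval x w p) + k := by
  classical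
  let zeros := Finset.univ.filter fun m => weightedEval x w p m = 0
  have card_add : hWeight (weightedEval x w p) + zeros.card = n := hWeight_add_card_zeros _
  have eval_zeros : ∀ m ∈ zeros, p.eval (x m) = 0 := fun m hm =>
    (mul_eq_zero.1 (Finset.mem_filter.1 hm).2).resolve_left (hw m)
  have card_zeros_lt : zeros.card < k := by
    by_contra! hle
    have degree_lt : p.degree < zeros.card := (mem_degreeLT.1 hp).trans_le (mod_cast hle)
    exact hp0 (eq_zero_of_degree_lt_of_eval_index_eq_zero zeros hx.injOn degree_lt eval_zeros)
  omega

theorem weightedEval_injOn_degreeLT (hx : Function.Injective x) (hw : ∀ m, w m ≠ 0)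
    (hk : k ≤ n) : Set.InjOn (weightedEval x w) (degreeLT F k : Set F[X]) := by
  refine LinearMap.injOn_of_disjoint_ker le_rfl (LinearMap.disjoint_ker.2 fun p hp hp0 => ?_)
  by_contra hne
  have weight_lt := lt_hWeight_weightedEval_add hx hw hp hne
  rw [hp0, hWeight_zero] at weight_lt
  omega

theorem finrank_reedSolomonCode (hx : Function.Injective x) (hw : ∀ m, w m ≠ 0) (hk : k ≤ n) :
    Module.finrank F (reedSolomonCode x w k) = k := by
  have inj : Function.Injective ((weightedEval x w).domRestrict (degreeLT F k)) :=
    (weightedEval_injOn_degreeLT hx hw hk).injective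
  rw [reedSolomonCode, ← LinearMap.range_domRestrict, LinearMap.finrank_range_of_inj inj,
    (degreeLTEquiv F k).finrank_eq, Module.finrank_fin_fun]

theorem exists_mem_reedSolomonCode_hWeight_eq (hx : Function.Injective x) (hw : ∀ m, w m ≠ 0)
    (hk : k < n) :
    ∃ c ∈ reedSolomonCode x w (k + 1), c ≠ 0 ∧ hWeight c = n - k := by
  obtain ⟨s, -, card_s⟩ := Finset.exists_subset_card_eq (s := (Finset.univ : Finset (Fin n)))
    (n := k) (by simpa using hk.le)
  have nodal_mem : Lagrange.nodal s x ∈ degreeLT F (k + 1) := by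
    rw [mem_degreeLT, Lagrange.degree_nodal, card_s]
    exact_mod_cast k.lt_succ_self
  have weight_ge := lt_hWeight_weightedEval_add hx hw nodal_mem Lagrange.nodal_ne_zero
  have weight_le : hWeight (weightedEval x w (Lagrange.nodal s x)) + s.card ≤ n :=
    hWeight_add_card_le fun m hm => by
      rw [weightedEval_apply, Lagrange.eval_nodal_at_node hm, mul_zero]
  refine ⟨_, Submodule.mem_map_of_mem nodal_mem, fun h0 => ?_, by omega⟩
  rw [h0, hWeight_zero] at weight_ge
  omega

theorem minDist_reedSolomonCode (hx : Function.Injective x) (hw : ∀ m, w m ≠ 0) (hk : k < n) :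
    minDist (reedSolomonCode x w (k + 1)) = n - k := by
  refine IsLeast.csInf_eq ⟨exists_mem_reedSolomonCode_hWeight_eq hx hw hk, ?_⟩
  rintro _ ⟨_, ⟨p, hp, rfl⟩, hne, rfl⟩
  have hp0 : p ≠ 0 := by
    rintro rfl
    exact hne (map_zero _)
  have weight_lt := lt_hWeight_weightedEval_add hx hw hp hp0
  omega

end ReedSolomon

section Fourier

variable {F : Type*} [Field F] {n : ℕ} {ω : F}

theorem fourierRow_apply (i : ZMod n) (m : Fin n) :
    fourierRow n ω i m = (ω ^ i.val) ^ (m : ℕ) :=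
  pow_mul ω _ _

theorem fourierRow_natCast_apply (hω : ω ^ n = 1) (a : ℕ) (m : Fin n) :
    fourierRow n ω (a : ZMod n) m = (ω ^ a) ^ (m : ℕ) := by
  rw [fourierRow_apply, ZMod.val_natCast, ← pow_eq_pow_mod a hω]

theorem fourierRow_zero : fourierRow n ω 0 = 1 := by
  ext m
  simp [fourierRow]

theorem fourierRow_add [NeZero n] (hω : ω ^ n = 1) (i j : ZMod n) :
    fourierRow n ω (i + j) = fourierRow n ω i * fourierRow n ω j := by
  ext m
  rw [Pi.mul_apply, fourierRow_apply, fourierRow_apply, fourierRow_apply, ZMod.val_add,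
    ← pow_eq_pow_mod _ hω, pow_add, mul_pow]

theorem fourierRow_natCast (hω : ω ^ n = 1) (j : ℕ) :
    fourierRow n ω (j : ZMod n) = fourierRow n ω 1 ^ j := by
  ext m
  rw [Pi.pow_apply, ← Nat.cast_one, fourierRow_natCast_apply hω, fourierRow_natCast_apply hω,
    pow_one, pow_right_comm]

theorem fourierRow_ne_zero (hω : ω ≠ 0) (i : ZMod n) (m : Fin n) : fourierRow n ω i m ≠ 0 :=
  pow_ne_zero _ hω

theorem fourierRow_one_injective (hω : IsPrimitiveRoot ω n) :
    Function.Injective (fourierRow n ω 1) := by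
  intro a b hab
  rw [← Nat.cast_one, fourierRow_natCast_apply hω.pow_eq_one,
    fourierRow_natCast_apply hω.pow_eq_one, pow_one] at hab
  exact Fin.ext (hω.pow_inj a.2 b.2 hab)

theorem span_fourierRow_consecutive [NeZero n] (hω : ω ^ n = 1) (a : ZMod n) (k : ℕ) :
    Submodule.span F (fourierRow n ω '' ((fun j : ℕ => a + j) '' Set.Iio k)) =
      reedSolomonCode (fourierRow n ω 1) (fourierRow n ω a) k := by
  rw [reedSolomonCode_eq_span, Set.image_image]
  simp only [fourierRow_add hω, fourierRow_natCast hω]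

theorem sum_fourierRow [NeZero n] (hω : IsPrimitiveRoot ω n) (i : ZMod n) :
    ∑ m, fourierRow n ω i m = if i = 0 then (n : F) else 0 := by
  split_ifs with hi
  · simp [hi, fourierRow_zero]
  · have ne_one : ω ^ i.val ≠ 1 :=
      hω.pow_ne_one_of_pos_of_lt (mt (ZMod.val_eq_zero i).1 hi) i.val_lt
    simp only [fourierRow_apply]
    rw [Fin.sum_univ_eq_sum_range (fun m => (ω ^ i.val) ^ m), geom_sum_eq ne_one,
      pow_right_comm, hω.pow_eq_one, one_pow, sub_self, zero_div]

theorem sum_fourierRow_mul_fourierRow [NeZero n] (hω : IsPrimitiveRoot ω n) (i j : ZMod n) :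
    ∑ m, fourierRow n ω i m * fourierRow n ω j m = if i + j = 0 then (n : F) else 0 := by
  simp only [← sum_fourierRow hω, fourierRow_add hω.pow_eq_one, Pi.mul_apply]

theorem sum_fourierRow_neg_mul_linearCombination [NeZero n] (hω : IsPrimitiveRoot ω n)
    (c : ZMod n →₀ F) (j : ZMod n) :
    ∑ m, fourierRow n ω (-j) m * Finsupp.linearCombination F (fourierRow n ω) c m = c j * n := by
  calc ∑ m, fourierRow n ω (-j) m * Finsupp.linearCombination F (fourierRow n ω) c m
      = ∑ m, ∑ i, c i * (fourierRow n ω (-j) m * fourierRow n ω i m) := by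
        rw [Finsupp.linearCombination_apply, Finsupp.sum_fintype _ _ (by simp)]
        simp only [Finset.sum_apply, Pi.smul_apply, smul_eq_mul, Finset.mul_sum, mul_left_comm]
    _ = ∑ i, c i * ∑ m, fourierRow n ω (-j) m * fourierRow n ω i m := by
        rw [Finset.sum_comm]
        simp only [Finset.mul_sum]
    _ = c j * n := by
        simp [sum_fourierRow_mul_fourierRow hω, neg_add_eq_zero]

theorem span_fourierRow_inf_dualCode_eq_bot [NeZero n] (hω : IsPrimitiveRoot ω n)
    {S : Set (ZMod n)} (hS : ∀ i ∈ S, -i ∈ S) :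
    Submodule.span F (fourierRow n ω '' S) ⊓
      dualCode (Submodule.span F (fourierRow n ω '' S)) = ⊥ := by
  rw [eq_bot_iff]
  rintro v ⟨v_mem, v_dual⟩
  obtain ⟨c, c_supp, rfl⟩ := (Finsupp.mem_span_image_iff_linearCombination F).1 v_mem
  have n_ne_zero : (n : F) ≠ 0 := hω.neZero'.ne
  have c_eq_zero : c = 0 := by
    ext j
    by_cases hj : j ∈ S
    · have orthogonal :=
        v_dual _ (Submodule.subset_span (Set.mem_image_of_mem (fourierRow n ω) (hS j hj)))
      rw [sum_fourierRow_neg_mul_linearCombination hω] at orthogonal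
      exact (mul_eq_zero.1 orthogonal).resolve_right n_ne_zero
    · exact (Finsupp.mem_supported' F c).1 c_supp j hj
  rw [c_eq_zero, map_zero]
  exact Submodule.zero_mem _

end Fourier

section SymmetricBlock

variable {n r : ℕ}

theorem symmetric_block_eq_image_neg_add_natCast [NeZero n] (hr : 2 * r + 1 ≤ n) :
    {i : ZMod n | i.val ≤ r ∨ n - r ≤ i.val} =
      (fun j : ℕ => (-r : ZMod n) + j) '' Set.Iio (2 * r + 1) := by
  ext i
  constructor
  · have i_lt := i.val_lt
    rintro (le_r | ge_sub)
    · refine ⟨i.val + r, Set.mem_Iio.2 (by omega), ?_⟩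
      simp
    · refine ⟨i.val + r - n, Set.mem_Iio.2 (by omega), ?_⟩
      simp [Nat.cast_sub (show n ≤ i.val + r by omega)]
  · rintro ⟨j, j_lt, rfl⟩
    simp only [Set.mem_Iio, Set.mem_ofPred_eq] at j_lt ⊢
    rcases lt_or_ge j r with j_lt_r | r_le_j
    · have eq_cast : (-r : ZMod n) + j = (n - r + j : ℕ) := by
        simp [Nat.cast_sub (show r ≤ n by omega)]
      right
      rw [eq_cast, ZMod.val_cast_of_lt (by omega)]
      omega
    · have eq_cast : (-r : ZMod n) + j = (j - r : ℕ) := by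
        rw [Nat.cast_sub r_le_j, neg_add_eq_sub]
      left
      rw [eq_cast, ZMod.val_cast_of_lt (by omega)]
      omega

theorem neg_mem_image_neg_add_natCast {R : Type*} [Ring R] {i : R}
    (hi : i ∈ (fun j : ℕ => (-r : R) + j) '' Set.Iio (2 * r + 1)) :
    -i ∈ (fun j : ℕ => (-r : R) + j) '' Set.Iio (2 * r + 1) := by
  obtain ⟨j, j_lt, rfl⟩ := hi
  rw [Set.mem_Iio] at j_lt
  refine ⟨2 * r - j, Set.mem_Iio.2 (by omega), ?_⟩
  push_cast [show j ≤ 2 * r by omega]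
  noncomm_ring

end SymmetricBlock

/-- The span of the `2r+1` rows `e_0, …, e_r, e_{n−r}, …, e_{n−1}` of the
Fourier matrix is an LCD MDS code of length `n`, dimension `2r+1` and minimum distance `n − 2r`. -/
theorem span_symmetric_block_LCD_MDS {F : Type*} [Field F] (n : ℕ) [NeZero n] (ω : F)
    (hω1 : ω ^ n = 1) (hωprim : ∀ i : ℕ, 1 ≤ i → i < n → ω ^ i ≠ 1)
    (r : ℕ) (hr : 2 * r + 1 ≤ n)
    (C : Submodule F (Fin n → F))
    (hC : C = Submodule.span F
      (fourierRow n ω '' {i : ZMod n | i.val ≤ r ∨ n - r ≤ i.val})) :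
    Module.finrank F C = 2 * r + 1 ∧ minDist C = n - 2 * r ∧ C ⊓ dualCode C = ⊥ := by
  have hω : IsPrimitiveRoot ω n := IsPrimitiveRoot.mk_of_lt ω (NeZero.pos n) hω1 hωprim
  have nodes_inj := fourierRow_one_injective hω
  have weights_ne_zero := fourierRow_ne_zero (hω.ne_zero (NeZero.ne n)) (-r : ZMod n)
  rw [symmetric_block_eq_image_neg_add_natCast hr] at hC
  have C_eq_reedSolomon := hC.trans (span_fourierRow_consecutive hω1 _ _)
  refine ⟨?_, ?_, ?_⟩
  · rw [C_eq_reedSolomon, finrank_reedSolomonCode nodes_inj weights_ne_zero hr]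
  · rw [C_eq_reedSolomon, minDist_reedSolomonCode nodes_inj weights_ne_zero hr]
  · rw [hC]
    exact span_fourierRow_inf_dualCode_eq_bot hω fun _ => neg_mem_image_neg_add_natCast
end
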